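/- Let (G,C) be a strongly connected inhomogeneous Mauldin–Williams graph in ℝ^d satisfying the SOSC, with the sets X_i having pairwise disjoint interiors and with ∫₀^∞ e^{−s₀(G)t} N_{e^{−t}}(C_i) dt < ∞ for all i ∈ V, and set K^C = ⋃_{i∈V} K_i^C and s₀ = s₀(G). If (t_n)_{n∈ℕ} is a sequence of positive reals tending to ∞ such that lim_{n→∞} e^{−s₀t_n} N_{e^{−t_n}}(K_i^C) exists for every i ∈ V, then lim_{n→∞} e^{−s₀t_n} N_{e^{−t_n}}(K^C) exists and equals Σ_{i∈V} lim_{n→∞} e^{−s₀t_n} N_{e^{−t_n}}(K_i^C). -/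

import Mathlib

open Set Filter Topology MeasureTheory Metric

noncomputable section

/-- Points of `ℝ^d`. -/
abbrev Pt (d : ℕ) := EuclideanSpace ℝ (Fin d)

/-- The `r`-covering number of `A ⊆ ℝ^d`: the least number of closed balls of
radius `r` needed to cover `A`. -/
noncomputable def coveringNumber {d : ℕ} (A : Set (Pt d)) (r : ℝ) : ℕ :=
  sInf {k : ℕ | ∃ c : Fin k → Pt d, A ⊆ ⋃ i, Metric.closedBall (c i) r}

/-- A Mauldin–Williams graph in `ℝ^d` over a finite directed multigraph with
vertex type `V` and edge type `E`: each vertex `i` carries a non-empty compact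
set `X i` equal to the closure of its interior, and each edge `e` carries a
contractive similarity `S e` of ratio `r e ∈ (0,1)` mapping `X (term e)` into
`X (init e)`. -/
structure MWGraph (d : ℕ) (V E : Type) [Fintype V] [Fintype E] where
  init : E → V
  term : E → V
  X : V → Set (Pt d)
  S : E → Pt d → Pt d
  r : E → ℝ
  X_nonempty : ∀ i, (X i).Nonempty
  X_compact : ∀ i, IsCompact (X i)
  X_regular : ∀ i, closure (interior (X i)) = X i
  r_pos : ∀ e, 0 < r e
  r_lt_one : ∀ e, r e < 1
  S_maps : ∀ e, Set.MapsTo (S e) (X (term e)) (X (init e))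
  S_sim : ∀ e x y, dist (S e x) (S e y) = r e * dist x y

namespace MWGraph

variable {d : ℕ} {V E : Type} [Fintype V] [Fintype E]

variable (G : MWGraph d V E)

/-- `G.IsPathFrom j γ` holds iff the list of edges `γ` is a directed path
starting at vertex `j`. -/
def IsPathFrom : V → List E → Prop
  | _, [] => True
  | j, e :: es => G.init e = j ∧ IsPathFrom (G.term e) es

/-- Terminal vertex of the path `γ` starting at `j`. -/
def pathTerm : V → List E → V
  | j, [] => j
  | _, e :: es => pathTerm (G.term e) es

/-- `S_γ = S_{e₁} ∘ ⋯ ∘ S_{eₙ}` (with `S_∅ = id`). -/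
def pathMap : List E → Pt d → Pt d
  | [] => id
  | e :: es => G.S e ∘ pathMap es

/-- `r_γ = r_{e₁} ⋯ r_{eₙ}` (with `r_∅ = 1`). -/
def pathRatio (γ : List E) : ℝ := (γ.map G.r).prod

/-- The underlying multigraph is strongly connected: for every ordered pair of
vertices there is a (non-empty) directed path from the first to the second. -/
def StronglyConnected : Prop :=
  ∀ i j : V, ∃ γ : List E, γ ≠ [] ∧ G.IsPathFrom i γ ∧ G.pathTerm i γ = j

/-- `K` is the list of graph-directed self-similar sets of `G`: the unique list
of non-empty compact sets with `K i = ⋃_{e ∈ E_i} S_e (K (term e))`. -/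
def IsAttractor (K : V → Set (Pt d)) : Prop :=
  (∀ i, IsCompact (K i)) ∧ (∀ i, (K i).Nonempty) ∧
    ∀ i, K i = ⋃ e ∈ {e : E | G.init e = i}, G.S e '' K (G.term e)

/-- `C` is an admissible list of condensation sets: compact subsets of the `X i`. -/
def IsCondensation (C : V → Set (Pt d)) : Prop :=
  ∀ i, IsCompact (C i) ∧ C i ⊆ G.X i

/-- `K` is the list of inhomogeneous graph-directed self-similar sets of `(G, C)`:
the unique list of non-empty compact sets with
`K i = ⋃_{e ∈ E_i} S_e (K (term e)) ∪ C i`. -/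
def IsInhomAttractor (C : V → Set (Pt d)) (K : V → Set (Pt d)) : Prop :=
  (∀ i, IsCompact (K i)) ∧ (∀ i, (K i).Nonempty) ∧
    ∀ i, K i = (⋃ e ∈ {e : E | G.init e = i}, G.S e '' K (G.term e)) ∪ C i

/-- `G` satisfies the open set condition with the open sets `U`. -/
def IsOSCWith (U : V → Set (Pt d)) : Prop :=
  (∀ i, (U i).Nonempty) ∧ (∀ i, IsOpen (U i)) ∧ (∀ i, Bornology.IsBounded (U i)) ∧
    (∀ i, U i ⊆ G.X i) ∧
    (∀ i, (⋃ e ∈ {e : E | G.init e = i}, G.S e '' U (G.term e)) ⊆ U i) ∧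
    ∀ e e' : E, G.init e = G.init e' → e ≠ e' →
      Disjoint (G.S e '' U (G.term e)) (G.S e' '' U (G.term e'))

/-- The set `{-log r_γ : γ a directed cycle of G}`. -/
def cycleSet : Set ℝ :=
  {x : ℝ | ∃ (j : V) (γ : List E), γ ≠ [] ∧ G.IsPathFrom j γ ∧ G.pathTerm j γ = j ∧
    x = -Real.log (G.pathRatio γ)}

/-- `G_M`, the smallest closed additive subgroup of `ℝ` containing
`{-log r_γ : γ a directed cycle}`. -/
def GM : Set ℝ := closure ((AddSubgroup.closure (G.cycleSet) : AddSubgroup ℝ) : Set ℝ)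

variable [DecidableEq V]

/-- The matrix `A_G^s` with entries `(A_G^s)_{ij} = Σ_{e ∈ E_{ij}} r_e^s`. -/
def Amatrix (s : ℝ) : Matrix V V ℝ :=
  Matrix.of fun i j => ∑ e : E, if G.init e = i ∧ G.term e = j then G.r e ^ s else 0

end MWGraph

/-- Spectral radius of a real square matrix: the largest modulus of a complex
eigenvalue. -/
noncomputable def matrixSpectralRadius {n : Type} [Fintype n] [DecidableEq n]
    (A : Matrix n n ℝ) : ℝ :=
  sSup {x : ℝ | ∃ μ : ℂ, μ ∈ spectrum ℂ (A.map (fun a : ℝ => (a : ℂ))) ∧ x = ‖μ‖}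

/-- `s` is the (unique) exponent `s ≥ 0` with `ρ(A_G^s) = 1`, i.e. `s = s₀(G)`. -/
def IsS0 {d : ℕ} {V E : Type} [Fintype V] [Fintype E] [DecidableEq V]
    (G : MWGraph d V E) (s : ℝ) : Prop :=
  0 ≤ s ∧ matrixSpectralRadius (G.Amatrix s) = 1

/-!
A closed `r`-ball meets two of the sets `K_i^C` only in their boundary layers, i.e. in points `x` of
`K_i^C` whose closed `2r`-ball is not contained in `U_i`, because the `U_i` are disjoint. Hence
covering numbers are additive over the `K_i^C` up to the covering numbers of the layers, and it
suffices to show that the latter are `o(r^{-s})`, `s = s₀`.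

By Perron–Frobenius there is a vector `h > 0` with `A_G^s h ≤ h`. Since `U_i` meets `K_i`, some
cylinder of `K_i^C` lies well inside `U_i` and misses the layer for all small `r`. Cutting `K_i^C`
into cylinders along paths and discarding that one bounds the layers by a strictly subcritical
renewal inequality with respect to `h`, whose inhomogeneity comes from copies of the condensation
sets and is `o(r^{-s})`. Some `s' < s` is still subcritical, and comparison with
`(η r^{-s} + B r^{-s'}) h` for arbitrarily small `η > 0` gives the claim.
-/

open Asymptotics

section PerronFrobenius

open scoped Matrix NNReal ENNReal

lemma summable_pow_inv_smul_of_spectralRadius_lt {A : Type*} [NormedRing A] [NormedAlgebra ℂ A]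
    [CompleteSpace A] {a : A} {q : ℝ≥0} (ha : spectralRadius ℂ a < q) :
    Summable fun n : ℕ ↦ ((q : ℂ)⁻¹ • a) ^ n := by
  obtain ⟨c, hac, hcq⟩ := ENNReal.lt_iff_exists_nnreal_btwn.1 ha
  have hcq : c < q := ENNReal.coe_lt_coe.1 hcq
  have hq : 0 < q := hcq.trans_le' zero_le
  refine .of_norm_bounded_eventually_nat (g := fun n ↦ ((c / q : ℝ≥0) : ℝ) ^ n)
    (summable_geometric_of_lt_one (by positivity) (by exact_mod_cast (div_lt_one hq).2 hcq)) ?_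
  have hroot := (spectrum.pow_nnnorm_pow_one_div_tendsto_nhds_spectralRadius a).eventually_lt_const
    hac
  filter_upwards [hroot, eventually_gt_atTop 0] with n hn hn0
  have hpow : ‖a ^ n‖₊ ≤ c ^ n := by
    have h : ((‖a ^ n‖₊ : ℝ≥0∞) ^ (1 / n : ℝ)) ^ n ≤ (c : ℝ≥0∞) ^ n := by gcongr
    rw [← ENNReal.rpow_mul_natCast, one_div_mul_cancel (by positivity), ENNReal.rpow_one] at h
    exact_mod_cast h
  calc ‖((q : ℂ)⁻¹ • a) ^ n‖ = (q : ℝ)⁻¹ ^ n * ‖a ^ n‖ := by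
        rw [smul_pow, norm_smul, norm_pow, norm_inv]; simp
    _ ≤ (q : ℝ)⁻¹ ^ n * c ^ n := by gcongr; exact_mod_cast hpow
    _ = ((c / q : ℝ≥0) : ℝ) ^ n := by push_cast; rw [div_eq_inv_mul, mul_pow]

variable {V : Type} [Fintype V] [DecidableEq V]

lemma matrixSpectralRadius_nonneg (A : Matrix V V ℝ) : 0 ≤ matrixSpectralRadius A :=
  Real.sSup_nonneg <| by rintro _ ⟨μ, -, rfl⟩; exact norm_nonneg μ

attribute [local instance] Matrix.linftyOpNormedRing Matrix.linftyOpNormedAlgebra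

lemma norm_le_matrixSpectralRadius {A : Matrix V V ℝ} {μ : ℂ}
    (hμ : μ ∈ spectrum ℂ (A.map (fun a : ℝ ↦ (a : ℂ)))) : ‖μ‖ ≤ matrixSpectralRadius A := by
  refine le_csSup ⟨‖A.map (fun a : ℝ ↦ (a : ℂ))‖ * ‖(1 : Matrix V V ℂ)‖, ?_⟩ ⟨μ, hμ, rfl⟩
  rintro _ ⟨ν, hν, rfl⟩
  exact spectrum.norm_le_norm_mul_of_mem hν

lemma spectralRadius_map_ofReal_le (A : Matrix V V ℝ) :
    spectralRadius ℂ (A.map (fun a : ℝ ↦ (a : ℂ))) ≤ ENNReal.ofReal (matrixSpectralRadius A) := by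
  refine iSup₂_le fun μ hμ ↦ ?_
  rw [← enorm_eq_nnnorm, ← ofReal_norm]
  exact ENNReal.ofReal_le_ofReal (norm_le_matrixSpectralRadius hμ)

lemma summable_pow_inv_smul_of_matrixSpectralRadius_lt {A : Matrix V V ℝ} {q : ℝ}
    (hq : matrixSpectralRadius A < q) : Summable fun n : ℕ ↦ (q⁻¹ • A) ^ n := by
  lift q to ℝ≥0 using (matrixSpectralRadius_nonneg A).trans hq.le
  have hlt : spectralRadius ℂ (A.map (fun a : ℝ ↦ (a : ℂ))) < q := by
    refine (spectralRadius_map_ofReal_le A).trans_lt ?_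
    rw [← ENNReal.ofReal_coe_nnreal]
    exact (ENNReal.ofReal_lt_ofReal_iff_of_nonneg (matrixSpectralRadius_nonneg A)).2 hq
  have hsum := summable_pow_inv_smul_of_spectralRadius_lt hlt
  refine Pi.summable.2 fun i ↦ Pi.summable.2 fun j ↦ Complex.summable_ofReal.1 ?_
  refine (Pi.summable.1 (Pi.summable.1 hsum i) j).congr fun n ↦ ?_
  have hmap : (q : ℂ)⁻¹ • A.map (fun a : ℝ ↦ (a : ℂ)) =
      (algebraMap ℝ ℂ).mapMatrix ((q : ℝ)⁻¹ • A) := by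
    ext; simp
  rw [hmap, ← map_pow]
  rfl

-- The row sums `g` of the nonnegative matrix `q (q - A)⁻¹` satisfy `A g = q g - q`.
lemma exists_one_le_mulVec_le_smul {A : Matrix V V ℝ} (hA : ∀ i j, 0 ≤ A i j) {q : ℝ}
    (hq : matrixSpectralRadius A < q) : ∃ g : V → ℝ, 1 ≤ g ∧ A *ᵥ g ≤ q • g := by
  have hq0 : 0 < q := (matrixSpectralRadius_nonneg A).trans_lt hq
  have hsum := summable_pow_inv_smul_of_matrixSpectralRadius_lt hq
  set B := q⁻¹ • A with hB
  set R := ∑' n, B ^ n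
  have hB0 : ∀ i j, 0 ≤ B i j := fun i j ↦ mul_nonneg (by positivity) (hA i j)
  have hR0 : ∀ i j, 0 ≤ R i j := fun i j ↦
    (Pi.hasSum.1 (Pi.hasSum.1 hsum.hasSum i) j).nonneg fun n ↦ Matrix.pow_apply_nonneg hB0 n i j
  have hR : R = 1 + B * R := by
    rw [← sub_eq_iff_eq_add, ← one_sub_mul, hsum.one_sub_mul_tsum_pow]
  have hBR : 0 ≤ (B * R) *ᵥ 1 := fun i ↦ Finset.sum_nonneg fun j _ ↦
    mul_nonneg (Finset.sum_nonneg fun k _ ↦ mul_nonneg (hB0 i k) (hR0 k j)) zero_le_one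
  have hg : R *ᵥ 1 = 1 + (B * R) *ᵥ 1 := by
    conv_lhs => rw [hR, Matrix.add_mulVec, Matrix.one_mulVec]
  refine ⟨R *ᵥ 1, by rw [hg]; exact le_add_of_nonneg_right hBR, ?_⟩
  calc A *ᵥ (R *ᵥ 1) = q • (B * R) *ᵥ 1 := by
        rw [hB, Matrix.mulVec_mulVec, Matrix.smul_mul, Matrix.smul_mulVec, smul_inv_smul₀ hq0.ne']
    _ ≤ q • R *ᵥ 1 := by
        rw [hg]
        exact smul_le_smul_of_nonneg_left (le_add_of_nonneg_left zero_le_one) hq0.le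

lemma exists_nonneg_mulVec_le_matrixSpectralRadius_smul [Nonempty V] {A : Matrix V V ℝ}
    (hA : ∀ i j, 0 ≤ A i j) :
    ∃ h : V → ℝ, 0 ≤ h ∧ h ≠ 0 ∧ A *ᵥ h ≤ matrixSpectralRadius A • h := by
  set ρ := matrixSpectralRadius A
  have happrox : ∀ n : ℕ, ∃ h : V → ℝ, 0 ≤ h ∧ h ∈ sphere 0 1 ∧
      A *ᵥ h ≤ (ρ + 1 / ((n : ℝ) + 1)) • h := by
    intro n
    obtain ⟨g, hg1, hAg⟩ := exists_one_le_mulVec_le_smul hA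
      (lt_add_of_pos_right ρ (Nat.one_div_pos_of_nat (n := n)))
    have hg0 : 0 ≤ g := zero_le_one.trans hg1
    have hg : g ≠ 0 := by
      rintro rfl
      exact zero_lt_one.not_ge (hg1 (Classical.arbitrary V))
    refine ⟨‖g‖⁻¹ • g, smul_nonneg (by positivity) hg0, by simp [norm_smul, hg], ?_⟩
    rw [Matrix.mulVec_smul, smul_comm]
    exact smul_le_smul_of_nonneg_left hAg (by positivity)
  choose g hg0 hg1 hAg using happrox
  obtain ⟨h, hh, φ, hφ, hlim⟩ := (isCompact_sphere (0 : V → ℝ) 1).tendsto_subseq hg1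
  refine ⟨h, ge_of_tendsto' hlim fun n ↦ hg0 _, ne_zero_of_mem_unit_sphere ⟨h, hh⟩, ?_⟩
  have hρlim : Tendsto (fun n ↦ ρ + 1 / ((φ n : ℝ) + 1)) atTop (𝓝 ρ) := by
    simpa using (tendsto_one_div_add_atTop_nhds_zero_nat.comp hφ.tendsto_atTop).const_add ρ
  have hAlim : Tendsto (fun n ↦ A *ᵥ g (φ n)) atTop (𝓝 (A *ᵥ h)) :=
    ((continuous_const.matrix_mulVec continuous_id).tendsto h).comp hlim
  exact le_of_tendsto_of_tendsto' hAlim (hρlim.smul hlim) fun n ↦ hAg _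

end PerronFrobenius

section Similarity

variable {X Y Z : Type*} [PseudoMetricSpace X] [PseudoMetricSpace Y] [PseudoMetricSpace Z]

/-- `f` is a similarity of ratio `ρ > 0`. Unlike for Mathlib's `Dilation`, the ratio is part of the
data, so that it is meaningful on one-point spaces too. -/
structure IsSimilarity (ρ : ℝ) (f : X → Y) : Prop where
  pos : 0 < ρ
  dist_eq : ∀ x y, dist (f x) (f y) = ρ * dist x y

namespace IsSimilarity

variable {ρ σ : ℝ} {f : X → Y}

lemma id : IsSimilarity 1 (id : X → X) := ⟨one_pos, fun _ _ ↦ (one_mul _).symm⟩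

lemma comp {g : Y → Z} (hg : IsSimilarity σ g) (hf : IsSimilarity ρ f) :
    IsSimilarity (σ * ρ) (g ∘ f) :=
  ⟨mul_pos hg.pos hf.pos, fun x y ↦ by
    rw [Function.comp_apply, Function.comp_apply, hg.dist_eq, hf.dist_eq, mul_assoc]⟩

lemma isBounded_image (hf : IsSimilarity ρ f) {A : Set X} (hA : Bornology.IsBounded A) :
    Bornology.IsBounded (f '' A) :=
  (LipschitzWith.of_dist_le_mul (K := ⟨ρ, hf.pos.le⟩) fun x y ↦ (hf.dist_eq x y).le).isBounded_image
    hA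

lemma map_mem_closedBall (hf : IsSimilarity ρ f) {x y : X} {r : ℝ} :
    f x ∈ closedBall (f y) r ↔ x ∈ closedBall y (r / ρ) := by
  rw [mem_closedBall, mem_closedBall, hf.dist_eq, le_div_iff₀' hf.pos]

lemma surjective {E : Type*} [NormedAddCommGroup E] [NormedSpace ℝ E] [StrictConvexSpace ℝ E]
    [FiniteDimensional ℝ E] {f : E → E} (hf : IsSimilarity ρ f) : Function.Surjective f := by
  have hρ : ρ ≠ 0 := hf.pos.ne'
  have hiso : Isometry fun x ↦ ρ⁻¹ • f x := Isometry.of_dist_eq fun x y ↦ by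
    rw [dist_smul₀, hf.dist_eq, Real.norm_of_nonneg (inv_nonneg.2 hf.pos.le),
      inv_mul_cancel_left₀ hρ]
  have : Inhabited E := ⟨0⟩
  intro y
  obtain ⟨x, hx⟩ :=
    (hiso.affineIsometryOfStrictConvexSpace.toAffineIsometryEquiv rfl).surjective (ρ⁻¹ • y)
  exact ⟨x, smul_right_injective _ (inv_ne_zero hρ) hx⟩

end IsSimilarity

end Similarity

section CoveringNumber

variable {d : ℕ} {A B : Set (Pt d)} {r r' ρ : ℝ} {ι : Type*}

lemma coveringNumber_le_card [Fintype ι] (c : ι → Pt d) (hc : A ⊆ ⋃ i, closedBall (c i) r) :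
    coveringNumber A r ≤ Fintype.card ι :=
  Nat.sInf_le ⟨c ∘ (Fintype.equivFin ι).symm,
    hc.trans ((Fintype.equivFin ι).symm.surjective.iUnion_comp fun i ↦ closedBall (c i) r).ge⟩

lemma exists_subset_iUnion_closedBall (hA : Bornology.IsBounded A) (hr : 0 < r) :
    ∃ c : Fin (coveringNumber A r) → Pt d, A ⊆ ⋃ i, closedBall (c i) r := by
  obtain ⟨F, hF, hAF⟩ := Metric.totallyBounded_iff.1
    (hA.isCompact_closure.totallyBounded.subset subset_closure) r hr
  obtain ⟨n, c, -, rfl⟩ := hF.fin_param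
  refine Nat.sInf_mem (s := {k | ∃ c : Fin k → Pt d, A ⊆ ⋃ i, closedBall (c i) r}) ⟨n, c, ?_⟩
  rw [biUnion_range] at hAF
  exact hAF.trans (iUnion_mono fun i ↦ ball_subset_closedBall)

lemma coveringNumber_empty : coveringNumber (∅ : Set (Pt d)) r = 0 :=
  Nat.le_zero.1 (coveringNumber_le_card (Fin.elim0 : Fin 0 → Pt d) (empty_subset _))

lemma coveringNumber_mono (hB : Bornology.IsBounded B) (hAB : A ⊆ B) (hr : 0 < r) :
    coveringNumber A r ≤ coveringNumber B r := by
  obtain ⟨c, hc⟩ := exists_subset_iUnion_closedBall hB hr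
  simpa using coveringNumber_le_card c (hAB.trans hc)

lemma coveringNumber_anti (hA : Bornology.IsBounded A) (hr : 0 < r) (hrr' : r ≤ r') :
    coveringNumber A r' ≤ coveringNumber A r := by
  obtain ⟨c, hc⟩ := exists_subset_iUnion_closedBall hA hr
  simpa using coveringNumber_le_card c
    (hc.trans (iUnion_mono fun i ↦ closedBall_subset_closedBall hrr'))

lemma coveringNumber_union_le (hA : Bornology.IsBounded A) (hB : Bornology.IsBounded B)
    (hr : 0 < r) : coveringNumber (A ∪ B) r ≤ coveringNumber A r + coveringNumber B r := by
  obtain ⟨a, ha⟩ := exists_subset_iUnion_closedBall hA hr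
  obtain ⟨b, hb⟩ := exists_subset_iUnion_closedBall hB hr
  simpa using coveringNumber_le_card (Sum.elim a b)
    ((union_subset_union ha hb).trans (iUnion_sum (s := fun i ↦ closedBall (Sum.elim a b i) r)).ge)

lemma coveringNumber_biUnion_le {P : Finset ι} {A : ι → Set (Pt d)}
    (hA : ∀ i ∈ P, Bornology.IsBounded (A i)) (hr : 0 < r) :
    coveringNumber (⋃ i ∈ P, A i) r ≤ ∑ i ∈ P, coveringNumber (A i) r := by
  classical
  induction P using Finset.induction_on with
  | empty => simp [coveringNumber_empty]
  | insert i P hi ih =>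
    rw [Finset.forall_mem_insert] at hA
    rw [Finset.set_biUnion_insert, Finset.sum_insert hi]
    exact (coveringNumber_union_le hA.1 ((Bornology.isBounded_biUnion_finset P).2 hA.2) hr).trans
      (by gcongr; exact ih hA.2)

lemma coveringNumber_iUnion_le [Fintype ι] {A : ι → Set (Pt d)}
    (hA : ∀ i, Bornology.IsBounded (A i)) (hr : 0 < r) :
    coveringNumber (⋃ i, A i) r ≤ ∑ i, coveringNumber (A i) r := by
  simpa using coveringNumber_biUnion_le (P := Finset.univ) (fun i _ ↦ hA i) hr

lemma IsSimilarity.coveringNumber_image_le {f : Pt d → Pt d} (hf : IsSimilarity ρ f)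
    (hA : Bornology.IsBounded A) (hr : 0 < r) :
    coveringNumber (f '' A) r ≤ coveringNumber A (r / ρ) := by
  obtain ⟨c, hc⟩ := exists_subset_iUnion_closedBall hA (div_pos hr hf.pos)
  refine (coveringNumber_le_card (f ∘ c) ?_).trans_eq (Fintype.card_fin _)
  rintro _ ⟨x, hx, rfl⟩
  obtain ⟨i, hi⟩ := mem_iUnion.1 (hc hx)
  exact mem_iUnion.2 ⟨i, hf.map_mem_closedBall.2 hi⟩

-- A ball of radius `r` meets at most one of the `A i`, so no ball of a cover is counted twice.
lemma sum_coveringNumber_le_of_separated [Fintype ι] {A : ι → Set (Pt d)}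
    (hA : ∀ i, Bornology.IsBounded (A i)) (hr : 0 < r)
    (hsep : Pairwise fun i j ↦ ∀ x ∈ A i, ∀ y ∈ A j, 2 * r < dist x y) :
    ∑ i, coveringNumber (A i) r ≤ coveringNumber (⋃ i, A i) r := by
  classical
  obtain ⟨c, hc⟩ := exists_subset_iUnion_closedBall (Bornology.isBounded_iUnion.2 hA) hr
  let J : ι → Finset (Fin (coveringNumber (⋃ i, A i) r)) := fun i ↦
    {k | (A i ∩ closedBall (c k) r).Nonempty}
  have hcard : ∀ i, coveringNumber (A i) r ≤ (J i).card := by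
    intro i
    refine (coveringNumber_le_card (fun k : J i ↦ c k) fun x hx ↦ ?_).trans_eq (Fintype.card_coe _)
    obtain ⟨k, hk⟩ := mem_iUnion.1 (hc (mem_iUnion_of_mem i hx))
    exact mem_iUnion.2 ⟨⟨k, by simpa [J] using ⟨x, hx, hk⟩⟩, hk⟩
  have hdisj : Pairwise fun i j ↦ Disjoint (J i) (J j) := by
    intro i j hij
    refine Finset.disjoint_left.2 fun k hki hkj ↦ ?_
    obtain ⟨x, hx, hxk⟩ := (Finset.mem_filter.1 hki).2
    obtain ⟨y, hy, hyk⟩ := (Finset.mem_filter.1 hkj).2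
    rw [mem_closedBall] at hxk hyk
    linarith [hsep hij x hx y hy, dist_triangle_right x y (c k)]
  calc ∑ i, coveringNumber (A i) r ≤ ∑ i, (J i).card := Finset.sum_le_sum fun i _ ↦ hcard i
    _ = (Finset.univ.biUnion J).card := (Finset.card_biUnion fun i _ j _ hij ↦ hdisj hij).symm
    _ ≤ coveringNumber (⋃ i, A i) r := (Finset.card_le_univ _).trans_eq (Fintype.card_fin _)

end CoveringNumber

section BoundaryLayer

variable {d : ℕ} {A U : Set (Pt d)} {r R : ℝ}

/-- The points of `A` at depth less than `R` in `U`: those whose closed `R`-ball leaves `U`. -/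
def boundaryLayer (A U : Set (Pt d)) (R : ℝ) : Set (Pt d) :=
  {x ∈ A | ¬ closedBall x R ⊆ U}

lemma boundaryLayer_subset : boundaryLayer A U R ⊆ A := fun _ hx ↦ hx.1

lemma closedBall_subset_of_mem_sdiff_boundaryLayer {x : Pt d} (hx : x ∈ A \ boundaryLayer A U R) :
    closedBall x R ⊆ U :=
  by_contra fun h ↦ hx.2 ⟨hx.1, h⟩

lemma IsSimilarity.mem_image_boundaryLayer {ρ : ℝ} {f : Pt d → Pt d} (hf : IsSimilarity ρ f)
    {W : Set (Pt d)} (hfU : MapsTo f U W) {x : Pt d} (hx : x ∈ A) (hxW : ¬ closedBall (f x) R ⊆ W) :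
    f x ∈ f '' boundaryLayer A U (R / ρ) := by
  refine mem_image_of_mem f ⟨hx, fun hxU ↦ hxW fun z hz ↦ ?_⟩
  obtain ⟨y, rfl⟩ := hf.surjective z
  exact hfU (hxU (hf.map_mem_closedBall.1 hz))

lemma sum_coveringNumber_le_add_boundaryLayer {ι : Type*} [Fintype ι] {A U : ι → Set (Pt d)}
    (hA : ∀ i, Bornology.IsBounded (A i)) (hU : Pairwise fun i j ↦ Disjoint (U i) (U j))
    (hr : 0 < r) :
    ∑ i, coveringNumber (A i) r ≤ coveringNumber (⋃ i, A i) r +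
      ∑ i, coveringNumber (boundaryLayer (A i) (U i) (2 * r)) r := by
  let L i := boundaryLayer (A i) (U i) (2 * r)
  have hL : ∀ i, Bornology.IsBounded (L i) := fun i ↦ (hA i).subset boundaryLayer_subset
  have hcore : ∀ i, Bornology.IsBounded (A i \ L i) := fun i ↦ (hA i).subset sdiff_subset
  have hsep : Pairwise fun i j ↦ ∀ x ∈ A i \ L i, ∀ y ∈ A j \ L j, 2 * r < dist x y := by
    intro i j hij x hx y hy
    by_contra! hxy
    exact disjoint_left.1 (hU hij)
      (closedBall_subset_of_mem_sdiff_boundaryLayer hx (mem_closedBall'.2 hxy))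
      (closedBall_subset_of_mem_sdiff_boundaryLayer hy (mem_closedBall_self (by positivity)))
  calc ∑ i, coveringNumber (A i) r
      ≤ ∑ i, (coveringNumber (A i \ L i) r + coveringNumber (L i) r) :=
        Finset.sum_le_sum fun i _ ↦ (coveringNumber_mono ((hcore i).union (hL i))
          (subset_sdiff_union _ _) hr).trans (coveringNumber_union_le (hcore i) (hL i) hr)
    _ = ∑ i, coveringNumber (A i \ L i) r + ∑ i, coveringNumber (L i) r := Finset.sum_add_distrib
    _ ≤ coveringNumber (⋃ i, A i) r + ∑ i, coveringNumber (L i) r := by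
        gcongr
        exact (sum_coveringNumber_le_of_separated hcore hr hsep).trans
          (coveringNumber_mono (Bornology.isBounded_iUnion.2 hA)
            (iUnion_mono fun i ↦ sdiff_subset) hr)

end BoundaryLayer

section IsNegligible

lemma map_exp_neg_atTop : map (fun u : ℝ ↦ Real.exp (-u)) atTop = 𝓝[>] 0 := by
  rw [← Real.map_exp_atBot, ← map_neg_atTop, map_map]
  rfl

lemma isLittleO_rpow_neg_iff_tendsto {g : ℝ → ℝ} {s : ℝ} :
    g =o[𝓝[>] 0] (fun r ↦ r ^ (-s)) ↔
      Tendsto (fun u ↦ Real.exp (-s * u) * g (Real.exp (-u))) atTop (𝓝 0) := by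
  rw [← map_exp_neg_atTop, isLittleO_map]
  refine (isLittleO_iff_tendsto fun u hu ↦
    absurd hu (Real.rpow_pos_of_pos (Real.exp_pos _) _).ne').trans (tendsto_congr fun u ↦ ?_)
  rw [Function.comp_apply, ← Real.exp_mul, div_eq_mul_inv, ← Real.exp_neg, mul_comm]
  congr 2
  ring

lemma tendsto_setLIntegral_Ioi_atTop {f : ℝ → ENNReal} {a : ℝ}
    (hf : ∫⁻ x in Ioi a, f x ≠ ⊤) : Tendsto (fun u ↦ ∫⁻ x in Ioi u, f x) atTop (𝓝 0) := by
  have hempty : ⋂ u : ℝ, Ioi u = ∅ :=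
    iInter_eq_empty_iff.2 fun x ↦ ⟨x, lt_irrefl x⟩
  have hlim := tendsto_measure_iInter_atTop (μ := volume.withDensity f)
    (fun u ↦ measurableSet_Ioi.nullMeasurableSet) (fun _ _ ↦ Ioi_subset_Ioi)
    ⟨a, by rwa [withDensity_apply _ measurableSet_Ioi]⟩
  rw [hempty, measure_empty] at hlim
  exact hlim.congr fun u ↦ withDensity_apply _ measurableSet_Ioi

variable {d : ℕ} {s ρ : ℝ} {A B : Set (Pt d)}

lemma isLittleO_coveringNumber_of_lintegral_ne_top (hA : Bornology.IsBounded A)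
    (hint : ∫⁻ t in Ioi (0 : ℝ),
      ENNReal.ofReal (Real.exp (-s * t) * (coveringNumber A (Real.exp (-t)) : ℝ)) ≠ ⊤) :
    (fun r ↦ (coveringNumber A r : ℝ)) =o[𝓝[>] 0] fun r ↦ r ^ (-s) := by
  rw [isLittleO_rpow_neg_iff_tendsto]
  let f : ℝ → ℝ := fun t ↦ Real.exp (-s * t) * coveringNumber A (Real.exp (-t))
  have hf : ∀ u, ∀ x ∈ Ioc u (u + 1), Real.exp (-|s|) * f u ≤ f x := by
    intro u x hx
    dsimp only [f]
    rw [← mul_assoc, ← Real.exp_add]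
    gcongr
    · nlinarith [neg_abs_le s, le_abs_self s, abs_nonneg s, hx.1, hx.2]
    · exact coveringNumber_anti hA (Real.exp_pos _) (Real.exp_le_exp.2 (neg_le_neg hx.1.le))
  have hle : ∀ u, ENNReal.ofReal (Real.exp (-|s|) * f u) ≤ ∫⁻ x in Ioi u, ENNReal.ofReal (f x) :=
    fun u ↦ calc
      ENNReal.ofReal (Real.exp (-|s|) * f u)
        = ∫⁻ _ in Ioc u (u + 1), ENNReal.ofReal (Real.exp (-|s|) * f u) := by simp
      _ ≤ ∫⁻ x in Ioc u (u + 1), ENNReal.ofReal (f x) :=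
        setLIntegral_mono' measurableSet_Ioc fun x hx ↦ ENNReal.ofReal_le_ofReal (hf u x hx)
      _ ≤ ∫⁻ x in Ioi u, ENNReal.ofReal (f x) := lintegral_mono_set Ioc_subset_Ioi_self
  have hlim := (ENNReal.tendsto_toReal ENNReal.zero_ne_top).comp
    (tendsto_of_tendsto_of_tendsto_of_le_of_le tendsto_const_nhds
      (tendsto_setLIntegral_Ioi_atTop hint) (fun _ ↦ zero_le) hle)
  rw [ENNReal.toReal_zero, ← smul_zero (Real.exp (-|s|))] at hlim
  refine (tendsto_const_smul_iff₀ (Real.exp_ne_zero (-|s|))).1 (hlim.congr fun u ↦ ?_)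
  exact ENNReal.toReal_ofReal (by positivity)

/-- A bounded set whose covering numbers are of smaller order than `r ^ (-s)`. Boundedness is
required because the covering numbers of an unbounded set take the junk value `0`. -/
structure IsNegligible (s : ℝ) (A : Set (Pt d)) : Prop where
  isBounded : Bornology.IsBounded A
  isLittleO : (fun r ↦ (coveringNumber A r : ℝ)) =o[𝓝[>] 0] fun r ↦ r ^ (-s)

lemma eventually_norm_coveringNumber_le {g : ℝ → ℕ}
    (hg : ∀ r > 0, coveringNumber A r ≤ g r) :
    ∀ᶠ r in 𝓝[>] 0, ‖(coveringNumber A r : ℝ)‖ ≤ 1 * ‖(g r : ℝ)‖ := by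
  filter_upwards [self_mem_nhdsWithin] with r hr
  simpa using hg r hr

namespace IsNegligible

lemma empty : IsNegligible s (∅ : Set (Pt d)) where
  isBounded := Bornology.isBounded_empty
  isLittleO := by simpa only [coveringNumber_empty, Nat.cast_zero] using isLittleO_zero _ _

lemma union (hA : IsNegligible s A) (hB : IsNegligible s B) : IsNegligible s (A ∪ B) where
  isBounded := hA.isBounded.union hB.isBounded
  isLittleO := by
    refine (IsBigO.of_bound 1 (eventually_norm_coveringNumber_le fun r hr ↦
      coveringNumber_union_le hA.isBounded hB.isBounded hr)).trans_isLittleO ?_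
    simpa only [Nat.cast_add] using hA.isLittleO.add hB.isLittleO

lemma biUnion {ι : Type*} {P : Finset ι} {A : ι → Set (Pt d)}
    (hA : ∀ i ∈ P, IsNegligible s (A i)) : IsNegligible s (⋃ i ∈ P, A i) := by
  classical
  induction P using Finset.induction_on with
  | empty => simpa using empty
  | insert i P _ ih =>
    rw [Finset.forall_mem_insert] at hA
    rw [Finset.set_biUnion_insert]
    exact hA.1.union (ih hA.2)

lemma image (hA : IsNegligible s A) {f : Pt d → Pt d} (hf : IsSimilarity ρ f) :
    IsNegligible s (f '' A) where
  isBounded := hf.isBounded_image hA.isBounded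
  isLittleO := by
    have hdiv : Tendsto (fun r ↦ r / ρ) (𝓝[>] 0) (𝓝[>] 0) := by
      simpa only [div_eq_inv_mul] using
        tendsto_iff_comap.2 (comap_mulLeft_nhdsGT_zero (inv_pos.2 hf.pos)).ge
    have hpow : (fun r ↦ (r / ρ) ^ (-s)) =O[𝓝[>] 0] fun r : ℝ ↦ r ^ (-s) := by
      refine .of_bound (ρ ^ s) ?_
      filter_upwards [self_mem_nhdsWithin] with r (hr : 0 < r)
      rw [Real.div_rpow hr.le hf.pos.le, Real.rpow_neg hf.pos.le, div_inv_eq_mul, norm_mul,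
        Real.norm_of_nonneg (Real.rpow_nonneg hf.pos.le s), mul_comm]
    exact ((IsBigO.of_bound 1 (eventually_norm_coveringNumber_le fun r hr ↦
      hf.coveringNumber_image_le hA.isBounded hr)).trans_isLittleO
        (hA.isLittleO.comp_tendsto hdiv)).trans_isBigO hpow

end IsNegligible

end IsNegligible

section Renewal

lemma forall_mem_Ioc_of_scale_induction {p : ℝ → Prop} {q r₀ R : ℝ} (hq0 : 0 < q) (hq1 : q < 1)
    (hr₀ : 0 < r₀) (hp : ∀ r ∈ Icc r₀ R, p r)
    (hstep : ∀ r ∈ Ioo 0 r₀, (∀ r' ∈ Icc (r / q) R, p r') → p r) : ∀ r ∈ Ioc 0 R, p r := by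
  have hscale : ∀ n : ℕ, ∀ r ∈ Icc (q ^ n * r₀) R, p r := by
    intro n
    induction n with
    | zero => simpa using hp
    | succ n ih =>
      intro r hr
      obtain h | h := le_or_gt r₀ r
      · exact hp r ⟨h, hr.2⟩
      refine hstep r ⟨hr.1.trans_lt' (by positivity), h⟩ fun r' hr' ↦ ih r' ⟨?_, hr'.2⟩
      refine hr'.1.trans' ((le_div_iff₀ hq0).2 (hr.1.trans_eq' ?_))
      ring
  intro r hr
  obtain ⟨n, hn⟩ := exists_pow_lt_of_lt_one (div_pos hr.1 hr₀) hq1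
  exact hscale n r ⟨((lt_div_iff₀ hr₀).1 hn).le, hr.2⟩

variable {V ι : Type*} {P : V → Finset ι} {τ : V → ι → V} {ρ : ι → ℝ} {h : V → ℝ} {s : ℝ}

lemma sum_div_rpow_neg_mul {r : ℝ} (hr : 0 ≤ r) {i : V} (hρ : ∀ a ∈ P i, 0 < ρ a) :
    ∑ a ∈ P i, (r / ρ a) ^ (-s) * h (τ i a) = r ^ (-s) * ∑ a ∈ P i, ρ a ^ s * h (τ i a) := by
  rw [Finset.mul_sum]
  refine Finset.sum_congr rfl fun a ha ↦ ?_
  rw [Real.div_rpow hr (hρ a ha).le, Real.rpow_neg (hρ a ha).le, div_inv_eq_mul, mul_assoc]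

lemma exists_lt_forall_sum_rpow_mul_lt [Finite V] (hρ : ∀ i, ∀ a ∈ P i, 0 < ρ a)
    (hsub : ∀ i, ∑ a ∈ P i, ρ a ^ s * h (τ i a) < h i) :
    ∃ s' < s, ∀ i, ∑ a ∈ P i, ρ a ^ s' * h (τ i a) < h i := by
  have hcont : ∀ i, ContinuousAt (fun s ↦ ∑ a ∈ P i, ρ a ^ s * h (τ i a)) s := fun i ↦
    tendsto_finsetSum _ fun a ha ↦
      (Real.continuousAt_const_rpow (hρ i a ha).ne').mul continuousAt_const
  have hev : ∀ᶠ s' in 𝓝 s, ∀ i, ∑ a ∈ P i, ρ a ^ s' * h (τ i a) < h i :=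
    eventually_all.2 fun i ↦ (hcont i).eventually_lt_const (hsub i)
  obtain ⟨s', hs', hs's⟩ :=
    ((hev.filter_mono nhdsWithin_le_nhds).and (self_mem_nhdsWithin (s := Iio s))).exists
  exact ⟨s', hs's, hs'⟩

lemma exists_forall_mem_Icc_le_mul_rpow_mul [Finite V] {N : V → ℝ → ℝ} {r₀ R : ℝ} (hr₀ : 0 < r₀)
    (hh : ∀ i, 0 < h i) (hN0 : ∀ i r, 0 ≤ N i r) (hN : ∀ i, BddAbove (N i '' Ici r₀)) (t : ℝ) :
    ∃ B ≥ 0, ∀ i, ∀ r ∈ Icc r₀ R, N i r ≤ B * r ^ t * h i := by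
  have hpos : ∀ r ∈ Icc r₀ R, 0 < r := fun r hr ↦ hr₀.trans_le hr.1
  obtain ⟨D, hD⟩ := (isCompact_Icc (a := r₀) (b := R)).bddAbove_image
    (f := fun r ↦ r ^ (-t)) fun r hr ↦
      (Real.continuousAt_rpow_const _ _ (.inl (hpos r hr).ne')).continuousWithinAt
  choose M hM using hN
  obtain ⟨B, hB⟩ := Finite.exists_le fun i ↦ M i * D / h i
  refine ⟨max B 0, le_max_right _ _, fun i r hr ↦ ?_⟩
  have hNM : N i r ≤ M i := hM i (mem_image_of_mem _ hr.1)
  have hrt : 0 < r ^ t := Real.rpow_pos_of_pos (hpos r hr) t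
  have hMB : M i * r ^ (-t) ≤ max B 0 * h i :=
    (mul_le_mul_of_nonneg_left (hD (mem_image_of_mem _ hr)) ((hN0 i r).trans hNM)).trans
      ((div_le_iff₀ (hh i)).1 ((hB i).trans (le_max_left _ _)))
  calc N i r = N i r * r ^ (-t) * r ^ t := by
        rw [Real.rpow_neg (hpos r hr).le, inv_mul_cancel_right₀ hrt.ne']
    _ ≤ M i * r ^ (-t) * r ^ t := by
        gcongr
        exact Real.rpow_nonneg (hpos r hr).le _
    _ ≤ max B 0 * h i * r ^ t := mul_le_mul_of_nonneg_right hMB hrt.le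
    _ = max B 0 * r ^ t * h i := by ring

lemma add_sum_div_rpow_neg_mul_le {i : V} {r c η B s' : ℝ} (hr : 0 ≤ r)
    (hρ : ∀ a ∈ P i, 0 < ρ a) (hB : 0 ≤ B) (hs' : ∑ a ∈ P i, ρ a ^ s' * h (τ i a) ≤ h i)
    (hc : c ≤ η * r ^ (-s) * (h i - ∑ a ∈ P i, ρ a ^ s * h (τ i a))) :
    c + ∑ a ∈ P i, (η * (r / ρ a) ^ (-s) + B * (r / ρ a) ^ (-s')) * h (τ i a) ≤
      (η * r ^ (-s) + B * r ^ (-s')) * h i := by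
  have hsum : ∑ a ∈ P i, (η * (r / ρ a) ^ (-s) + B * (r / ρ a) ^ (-s')) * h (τ i a) =
      η * (r ^ (-s) * ∑ a ∈ P i, ρ a ^ s * h (τ i a)) +
        B * (r ^ (-s') * ∑ a ∈ P i, ρ a ^ s' * h (τ i a)) := by
    rw [← sum_div_rpow_neg_mul hr hρ, ← sum_div_rpow_neg_mul hr hρ, Finset.mul_sum,
      Finset.mul_sum, ← Finset.sum_add_distrib]
    exact Finset.sum_congr rfl fun a _ ↦ by ring
  have hBs' := mul_le_mul_of_nonneg_left hs' (mul_nonneg hB (Real.rpow_nonneg hr (-s')))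
  linarith

variable [Finite V] {q : ℝ} {N c : V → ℝ → ℝ}

-- `(η r ^ (-s) + B r ^ (-s')) h` is a supersolution: its first part absorbs `c`, its second part
-- dominates `N` at the scales where the renewal inequality is not yet available.
lemma exists_forall_eventually_le_of_renewal (hq0 : 0 < q) (hq1 : q < 1)
    (hρ : ∀ i, ∀ a ∈ P i, 0 < ρ a ∧ ρ a ≤ q) (hh : ∀ i, 0 < h i)
    (hsub : ∀ i, ∑ a ∈ P i, ρ a ^ s * h (τ i a) < h i) {s' : ℝ}
    (hsub' : ∀ i, ∑ a ∈ P i, ρ a ^ s' * h (τ i a) < h i)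
    (hN0 : ∀ i r, 0 ≤ N i r) (hNbdd : ∀ i, ∀ x > 0, BddAbove (N i '' Ici x))
    (hc : ∀ i, c i =o[𝓝[>] 0] fun r ↦ r ^ (-s))
    (hN : ∀ i, ∀ᶠ r in 𝓝[>] 0, N i r ≤ c i r + ∑ a ∈ P i, N (τ i a) (r / ρ a))
    {η : ℝ} (hη : 0 < η) :
    ∃ B, ∀ i, ∀ᶠ r in 𝓝[>] 0, N i r ≤ (η * r ^ (-s) + B * r ^ (-s')) * h i := by
  have hcη : ∀ i, ∀ᶠ r in 𝓝[>] 0,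
      c i r ≤ η * r ^ (-s) * (h i - ∑ a ∈ P i, ρ a ^ s * h (τ i a)) := by
    intro i
    filter_upwards [(hc i).bound (mul_pos hη (sub_pos.2 (hsub i))), self_mem_nhdsWithin]
      with r hr (hr0 : 0 < r)
    rw [Real.norm_of_nonneg (Real.rpow_nonneg hr0.le _)] at hr
    exact (Real.le_norm_self _).trans (hr.trans_eq (by ring))
  obtain ⟨r₀, hr₀, hsmall⟩ := mem_nhdsGT_iff_exists_Ioo_subset.1
    ((eventually_all.2 hN).and (eventually_all.2 hcη))
  obtain ⟨R, hR⟩ := (finite_iUnion fun i ↦ (P i).finite_toSet.image fun a ↦ r₀ / ρ a).bddAbove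
  obtain ⟨B, hB0, hB⟩ := exists_forall_mem_Icc_le_mul_rpow_mul (R := max R r₀) hr₀ hh hN0
    (hNbdd · r₀ hr₀) (-s')
  have hle : ∀ r ∈ Ioc 0 (max R r₀), ∀ i, N i r ≤ (η * r ^ (-s) + B * r ^ (-s')) * h i := by
    refine forall_mem_Ioc_of_scale_induction hq0 hq1 hr₀ (fun r hr i ↦ ?_) fun r hr ih i ↦ ?_
    · have hr0 : 0 ≤ r := hr₀.le.trans hr.1
      refine (hB i r hr).trans (mul_le_mul_of_nonneg_right ?_ (hh i).le)
      exact le_add_of_nonneg_left (mul_nonneg hη.le (Real.rpow_nonneg hr0 _))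
    · refine ((hsmall hr).1 i).trans (le_trans ?_ (add_sum_div_rpow_neg_mul_le hr.1.le
        (fun a ha ↦ (hρ i a ha).1) hB0 (hsub' i).le ((hsmall hr).2 i)))
      gcongr with a ha
      refine ih _ ⟨div_le_div_of_nonneg_left hr.1.le (hρ i a ha).1 (hρ i a ha).2, ?_⟩ _
      exact ((div_le_div_of_nonneg_right hr.2.le (hρ i a ha).1.le).trans
        (hR (mem_iUnion_of_mem i (mem_image_of_mem _ ha)))).trans (le_max_left _ _)
  refine ⟨B, fun i ↦ ?_⟩
  filter_upwards [Ioc_mem_nhdsGT (hr₀.trans_le (le_max_right R r₀))] with r hr using hle r hr i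

lemma isLittleO_rpow_neg_rpow_neg {s s' : ℝ} (hs : s' < s) :
    (fun r : ℝ ↦ r ^ (-s')) =o[𝓝[>] 0] fun r ↦ r ^ (-s) := by
  refine isLittleO_rpow_neg_iff_tendsto.2 ?_
  have hlim : Tendsto (fun u ↦ Real.exp (-((s - s') * u))) atTop (𝓝 0) :=
    Real.tendsto_exp_neg_atTop_nhds_zero.comp (tendsto_id.const_mul_atTop (sub_pos.2 hs))
  refine hlim.congr fun u ↦ ?_
  rw [← Real.exp_mul, ← Real.exp_add]
  ring_nf

theorem isLittleO_of_renewal (hq0 : 0 < q) (hq1 : q < 1)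
    (hρ : ∀ i, ∀ a ∈ P i, 0 < ρ a ∧ ρ a ≤ q) (hh : ∀ i, 0 < h i)
    (hsub : ∀ i, ∑ a ∈ P i, ρ a ^ s * h (τ i a) < h i)
    (hN0 : ∀ i r, 0 ≤ N i r) (hNbdd : ∀ i, ∀ x > 0, BddAbove (N i '' Ici x))
    (hc : ∀ i, c i =o[𝓝[>] 0] fun r ↦ r ^ (-s))
    (hN : ∀ i, ∀ᶠ r in 𝓝[>] 0, N i r ≤ c i r + ∑ a ∈ P i, N (τ i a) (r / ρ a)) (i : V) :
    N i =o[𝓝[>] 0] fun r ↦ r ^ (-s) := by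
  obtain ⟨s', hs's, hsub'⟩ := exists_lt_forall_sum_rpow_mul_lt (fun i a ha ↦ (hρ i a ha).1) hsub
  refine isLittleO_iff.2 fun ε hε ↦ ?_
  obtain ⟨B, hB⟩ := exists_forall_eventually_le_of_renewal hq0 hq1 hρ hh hsub hsub' hN0 hNbdd hc hN
    (div_pos (half_pos hε) (hh i))
  have hsmall : (fun r : ℝ ↦ B * h i * r ^ (-s')) =o[𝓝[>] 0] fun r ↦ r ^ (-s) :=
    (isLittleO_rpow_neg_rpow_neg hs's).const_mul_left _
  filter_upwards [hB i, hsmall.bound (half_pos hε)] with r hNr hr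
  rw [Real.norm_of_nonneg (hN0 i r)]
  calc N i r ≤ (ε / 2 / h i * r ^ (-s) + B * r ^ (-s')) * h i := hNr
    _ = ε / 2 * r ^ (-s) + B * h i * r ^ (-s') := by field_simp [(hh i).ne']
    _ ≤ ε / 2 * ‖r ^ (-s)‖ + ε / 2 * ‖r ^ (-s)‖ :=
        add_le_add (mul_le_mul_of_nonneg_left (Real.le_norm_self _) (half_pos hε).le)
          ((Real.le_norm_self _).trans hr)
    _ = ε * ‖r ^ (-s)‖ := by ring

end Renewal

namespace MWGraph

variable {d : ℕ} {V E : Type} [Fintype V] [Fintype E] {G : MWGraph d V E}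
  {C K KC U : V → Set (Pt d)}

lemma IsInhomAttractor.isBounded_condensation (hKC : G.IsInhomAttractor C KC) (i : V) :
    Bornology.IsBounded (C i) :=
  (hKC.1 i).isBounded.subset (subset_union_right.trans (hKC.2.2 i).ge)

lemma IsOSCWith.mapsTo (hU : G.IsOSCWith U) (e : E) :
    MapsTo (G.S e) (U (G.term e)) (U (G.init e)) := fun _ hx ↦
  hU.2.2.2.2.1 _ (mem_iUnion₂.2 ⟨e, rfl, mem_image_of_mem _ hx⟩)

lemma IsOSCWith.subset_interior (hU : G.IsOSCWith U) (i : V) : U i ⊆ interior (G.X i) :=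
  interior_maximal (hU.2.2.2.1 i) (hU.2.1 i)

variable (G)

lemma isSimilarity_S (e : E) : IsSimilarity (G.r e) (G.S e) := ⟨G.r_pos e, G.S_sim e⟩

lemma pathRatio_cons (e : E) (γ : List E) : G.pathRatio (e :: γ) = G.r e * G.pathRatio γ := by
  rw [pathRatio, List.map_cons, List.prod_cons, pathRatio]

lemma isSimilarity_pathMap (γ : List E) : IsSimilarity (G.pathRatio γ) (G.pathMap γ) := by
  induction γ with
  | nil => exact .id
  | cons e γ ih =>
    rw [pathRatio_cons]
    exact (G.isSimilarity_S e).comp ih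

lemma exists_r_le : ∃ q, 0 < q ∧ q < 1 ∧ ∀ e, G.r e ≤ q := by
  have hle : ∀ᶠ q in 𝓝[<] (1 : ℝ), ∀ e, G.r e ≤ q := eventually_all.2 fun e ↦
    nhdsWithin_le_nhds (Ici_mem_nhds (G.r_lt_one e))
  obtain ⟨q, hq, hq0, hq1⟩ := (hle.and (Ioo_mem_nhdsLT (one_pos (α := ℝ)))).exists
  exact ⟨q, hq0, hq1, hq⟩

variable [DecidableEq V]

/-- The directed paths with `n` edges starting at a given vertex. -/
def pathsFrom : ℕ → V → Finset (List E)
  | 0, _ => {[]}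
  | n + 1, i => (({e | G.init e = i} : Finset E).sigma fun e ↦ pathsFrom n (G.term e)).map
      ⟨fun p ↦ p.1 :: p.2, fun _ _ h ↦
        Sigma.ext (List.cons.inj h).1 (heq_of_eq (List.cons.inj h).2)⟩

variable {G} {i : V} {n : ℕ} {γ : List E} {s q : ℝ}

lemma mem_pathsFrom_succ :
    γ ∈ G.pathsFrom (n + 1) i ↔
      ∃ e, G.init e = i ∧ ∃ γ' ∈ G.pathsFrom n (G.term e), e :: γ' = γ := by
  simp only [pathsFrom, Finset.mem_map, Finset.mem_sigma, Finset.mem_filter_univ, Sigma.exists,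
    and_assoc, exists_and_left]
  rfl

lemma sum_pathsFrom_succ (f : List E → ℝ) :
    ∑ γ ∈ G.pathsFrom (n + 1) i, f γ =
      ∑ e with G.init e = i, ∑ γ ∈ G.pathsFrom n (G.term e), f (e :: γ) := by
  rw [pathsFrom, Finset.sum_map, Finset.sum_sigma]
  rfl

lemma IsPathFrom.mem_pathsFrom (hγ : G.IsPathFrom i γ) : γ ∈ G.pathsFrom γ.length i := by
  induction γ generalizing i with
  | nil => exact Finset.mem_singleton_self _
  | cons e γ ih => exact mem_pathsFrom_succ.2 ⟨e, hγ.1, γ, ih hγ.2, rfl⟩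

lemma pathRatio_le_pow (hq : ∀ e, G.r e ≤ q) (hγ : γ ∈ G.pathsFrom n i) :
    G.pathRatio γ ≤ q ^ n := by
  induction n generalizing i γ with
  | zero =>
    rw [Finset.mem_singleton.1 hγ]
    simp [pathRatio]
  | succ n ih =>
    obtain ⟨e, -, γ, hγe, rfl⟩ := mem_pathsFrom_succ.1 hγ
    rw [pathRatio_cons, pow_succ']
    exact mul_le_mul (hq e) (ih hγe) (G.isSimilarity_pathMap γ).pos.le ((G.r_pos e).le.trans (hq e))

lemma mapsTo_pathMap
    (hU : ∀ e, MapsTo (G.S e) (U (G.term e)) (U (G.init e))) (hγ : γ ∈ G.pathsFrom n i) :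
    MapsTo (G.pathMap γ) (U (G.pathTerm i γ)) (U i) := by
  induction n generalizing i γ with
  | zero =>
    rw [Finset.mem_singleton.1 hγ]
    exact mapsTo_id _
  | succ n ih =>
    obtain ⟨e, rfl, γ, hγe, rfl⟩ := mem_pathsFrom_succ.1 hγ
    exact (hU e).comp (ih hγe)

section SubinvariantVector

open scoped Matrix

variable {h : V → ℝ}

lemma Amatrix_mulVec_apply (i : V) :
    (G.Amatrix s *ᵥ h) i = ∑ e with G.init e = i, G.r e ^ s * h (G.term e) := by
  simp only [Matrix.mulVec, dotProduct, Amatrix, Matrix.of_apply, Finset.sum_mul]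
  rw [Finset.sum_comm, Finset.sum_filter]
  refine Finset.sum_congr rfl fun e _ ↦ ?_
  simp [ite_and]

lemma sum_pathsFrom_pathRatio_rpow_mul_le (hA : G.Amatrix s *ᵥ h ≤ h) (n : ℕ) (i : V) :
    ∑ γ ∈ G.pathsFrom n i, G.pathRatio γ ^ s * h (G.pathTerm i γ) ≤ h i := by
  induction n generalizing i with
  | zero => simp [pathsFrom, pathRatio, pathTerm]
  | succ n ih =>
    calc ∑ γ ∈ G.pathsFrom (n + 1) i, G.pathRatio γ ^ s * h (G.pathTerm i γ)
        = ∑ e with G.init e = i, G.r e ^ s * ∑ γ ∈ G.pathsFrom n (G.term e),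
            G.pathRatio γ ^ s * h (G.pathTerm (G.term e) γ) := by
          simp only [sum_pathsFrom_succ, Finset.mul_sum, pathRatio_cons, pathTerm, ← mul_assoc,
            Real.mul_rpow (G.r_pos _).le (G.isSimilarity_pathMap _).pos.le]
      _ ≤ ∑ e with G.init e = i, G.r e ^ s * h (G.term e) := by
          gcongr with e
          · exact Real.rpow_nonneg (G.r_pos e).le s
          · exact ih _
      _ = (G.Amatrix s *ᵥ h) i := (Amatrix_mulVec_apply i).symm
      _ ≤ h i := hA i

lemma StronglyConnected.exists_pos_Amatrix_mulVec_le (hSC : G.StronglyConnected)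
    (hs : matrixSpectralRadius (G.Amatrix s) ≤ 1) :
    ∃ h : V → ℝ, (∀ i, 0 < h i) ∧ G.Amatrix s *ᵥ h ≤ h := by
  cases isEmpty_or_nonempty V
  · exact ⟨0, isEmptyElim, isEmptyElim⟩
  have hA0 : ∀ i j, 0 ≤ G.Amatrix s i j := fun i j ↦ Finset.sum_nonneg fun e _ ↦ by
    split_ifs
    exacts [Real.rpow_nonneg (G.r_pos e).le s, le_rfl]
  obtain ⟨h, hh0, hne, hAh⟩ := exists_nonneg_mulVec_le_matrixSpectralRadius_smul hA0
  have hA : G.Amatrix s *ᵥ h ≤ h := hAh.trans fun i ↦ mul_le_of_le_one_left (hh0 i) hs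
  refine ⟨h, fun i ↦ ?_, hA⟩
  obtain ⟨j, hj⟩ := Function.ne_iff.1 hne
  obtain ⟨γ, -, hγ, rfl⟩ := hSC i j
  calc 0 < G.pathRatio γ ^ s * h (G.pathTerm i γ) :=
        mul_pos (Real.rpow_pos_of_pos (G.isSimilarity_pathMap γ).pos s) ((hh0 _).lt_of_ne' hj)
    _ ≤ ∑ γ' ∈ G.pathsFrom γ.length i, G.pathRatio γ' ^ s * h (G.pathTerm i γ') :=
        Finset.single_le_sum (f := fun γ ↦ G.pathRatio γ ^ s * h (G.pathTerm i γ))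
          (fun γ _ ↦ mul_nonneg (Real.rpow_nonneg (G.isSimilarity_pathMap γ).pos.le s) (hh0 _))
          hγ.mem_pathsFrom
    _ ≤ h i := sum_pathsFrom_pathRatio_rpow_mul_le hA _ i

end SubinvariantVector

section Attractors

lemma IsAttractor.exists_mem_pathsFrom (hK : G.IsAttractor K) (n : ℕ) {x : Pt d} (hx : x ∈ K i) :
    ∃ γ ∈ G.pathsFrom n i, x ∈ G.pathMap γ '' K (G.pathTerm i γ) := by
  induction n generalizing i x with
  | zero => exact ⟨[], Finset.mem_singleton_self _, x, hx, rfl⟩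
  | succ n ih =>
    rw [hK.2.2 i] at hx
    obtain ⟨e, he, y, hy, rfl⟩ := mem_iUnion₂.1 hx
    obtain ⟨γ, hγ, z, hz, rfl⟩ := ih hy
    exact ⟨e :: γ, mem_pathsFrom_succ.2 ⟨e, he, γ, hγ, rfl⟩, z, hz, rfl⟩

lemma IsInhomAttractor.exists_isNegligible (hKC : G.IsInhomAttractor C KC)
    (hC : ∀ i, IsNegligible s (C i)) (n : ℕ) (i : V) :
    ∃ R, IsNegligible s R ∧
      KC i ⊆ R ∪ ⋃ γ ∈ G.pathsFrom n i, G.pathMap γ '' KC (G.pathTerm i γ) := by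
  induction n generalizing i with
  | zero => exact ⟨∅, .empty, by simp [pathsFrom, pathMap, pathTerm]⟩
  | succ n ih =>
    choose R hR hKR using ih
    refine ⟨C i ∪ ⋃ e ∈ ({e | G.init e = i} : Finset E), G.S e '' R (G.term e),
      (hC i).union (.biUnion fun e _ ↦ (hR _).image (G.isSimilarity_S e)), fun x hx ↦ ?_⟩
    rw [hKC.2.2 i] at hx
    obtain hx | hx := hx
    · obtain ⟨e, rfl, y, hy, rfl⟩ := mem_iUnion₂.1 hx
      obtain hy | hy := hKR _ hy
      · exact .inl (.inr (mem_iUnion₂.2 ⟨e, by simp, mem_image_of_mem _ hy⟩))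
      · obtain ⟨γ, hγ, z, hz, rfl⟩ := mem_iUnion₂.1 hy
        exact .inr (mem_iUnion₂.2 ⟨e :: γ, mem_pathsFrom_succ.2 ⟨e, rfl, γ, hγ, rfl⟩, z, hz, rfl⟩)
    · exact .inl (.inl hx)

lemma IsAttractor.exists_path_closedBall_subset (hK : G.IsAttractor K) {W : Set (Pt d)}
    (hW : IsOpen W) (hWK : (W ∩ K i).Nonempty) {B : V → Set (Pt d)}
    (hB : ∀ j, Bornology.IsBounded (B j)) :
    ∃ n, ∃ γ ∈ G.pathsFrom (n + 1) i, ∃ δ > 0, ∀ y ∈ B (G.pathTerm i γ),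
      closedBall (G.pathMap γ y) δ ⊆ W := by
  obtain ⟨x, hxW, hxK⟩ := hWK
  obtain ⟨ε, hε, hεW⟩ := Metric.isOpen_iff.1 hW x hxW
  obtain ⟨D, hD⟩ := Metric.isBounded_iff.1
    (Bornology.isBounded_iUnion.2 fun j ↦ (hB j).union (hK.1 j).isBounded)
  obtain ⟨q, hq0, hq1, hq⟩ := G.exists_r_le
  have hlim : Tendsto (fun n : ℕ ↦ q ^ (n + 1) * D) atTop (𝓝 0) := by
    simpa using ((tendsto_pow_atTop_nhds_zero_of_lt_one hq0.le hq1).comp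
      (tendsto_add_atTop_nat 1)).mul_const D
  obtain ⟨n, hn⟩ := (hlim.eventually_lt_const (half_pos hε)).exists
  obtain ⟨γ, hγ, z, hz, rfl⟩ := hK.exists_mem_pathsFrom (n + 1) hxK
  refine ⟨n, γ, hγ, ε / 2, half_pos hε, fun y hy ↦ (closedBall_subset_ball' ?_).trans hεW⟩
  have hdist : dist y z ≤ D := hD (mem_iUnion_of_mem _ (.inl hy)) (mem_iUnion_of_mem _ (.inr hz))
  calc ε / 2 + dist (G.pathMap γ y) (G.pathMap γ z)
      = ε / 2 + G.pathRatio γ * dist y z := by rw [(G.isSimilarity_pathMap γ).dist_eq]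
    _ ≤ ε / 2 + q ^ (n + 1) * D := by
        gcongr
        exact pathRatio_le_pow hq hγ
    _ < ε := by linarith

open Classical in
lemma boundaryLayer_subset_union_biUnion_erase
    (hUS : ∀ e, MapsTo (G.S e) (U (G.term e)) (U (G.init e))) {R : Set (Pt d)} {r : ℝ}
    (hKR : KC i ⊆ R ∪ ⋃ γ ∈ G.pathsFrom n i, G.pathMap γ '' KC (G.pathTerm i γ)) {γ₀ : List E}
    (hγ₀ : ∀ y ∈ KC (G.pathTerm i γ₀), closedBall (G.pathMap γ₀ y) r ⊆ U i) :
    boundaryLayer (KC i) (U i) r ⊆ R ∪ ⋃ γ ∈ (G.pathsFrom n i).erase γ₀, G.pathMap γ ''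
      boundaryLayer (KC (G.pathTerm i γ)) (U (G.pathTerm i γ)) (r / G.pathRatio γ) := by
  rintro x ⟨hx, hxU⟩
  refine (hKR hx).imp_right fun hx ↦ ?_
  obtain ⟨γ, hγ, y, hy, rfl⟩ := mem_iUnion₂.1 hx
  have hne : γ ≠ γ₀ := by
    rintro rfl
    exact hxU (hγ₀ y hy)
  exact mem_iUnion₂.2 ⟨γ, Finset.mem_erase.2 ⟨hne, hγ⟩,
    (G.isSimilarity_pathMap γ).mem_image_boundaryLayer (mapsTo_pathMap hUS hγ) hy hxU⟩

open Classical in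
lemma coveringNumber_boundaryLayer_le
    (hUS : ∀ e, MapsTo (G.S e) (U (G.term e)) (U (G.init e)))
    (hKC : ∀ j, Bornology.IsBounded (KC j)) {R : Set (Pt d)} (hR : Bornology.IsBounded R) {r : ℝ}
    (hr : 0 < r) (hKR : KC i ⊆ R ∪ ⋃ γ ∈ G.pathsFrom n i, G.pathMap γ '' KC (G.pathTerm i γ))
    {γ₀ : List E}
    (hγ₀ : ∀ y ∈ KC (G.pathTerm i γ₀), closedBall (G.pathMap γ₀ y) (2 * r) ⊆ U i) :
    coveringNumber (boundaryLayer (KC i) (U i) (2 * r)) r ≤ coveringNumber R r +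
      ∑ γ ∈ (G.pathsFrom n i).erase γ₀, coveringNumber (boundaryLayer (KC (G.pathTerm i γ))
        (U (G.pathTerm i γ)) (2 * (r / G.pathRatio γ))) (r / G.pathRatio γ) := by
  let L γ := boundaryLayer (KC (G.pathTerm i γ)) (U (G.pathTerm i γ)) (2 * (r / G.pathRatio γ))
  have hL : ∀ γ, Bornology.IsBounded (L γ) := fun γ ↦ (hKC _).subset boundaryLayer_subset
  have himage : ∀ γ ∈ (G.pathsFrom n i).erase γ₀, Bornology.IsBounded (G.pathMap γ '' L γ) :=
    fun γ _ ↦ (G.isSimilarity_pathMap γ).isBounded_image (hL γ)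
  have hUnion := (Bornology.isBounded_biUnion_finset _).2 himage
  have hsub := boundaryLayer_subset_union_biUnion_erase hUS hKR hγ₀
  simp only [mul_div_assoc] at hsub
  calc coveringNumber (boundaryLayer (KC i) (U i) (2 * r)) r
      ≤ coveringNumber (R ∪ ⋃ γ ∈ (G.pathsFrom n i).erase γ₀, G.pathMap γ '' L γ) r :=
        coveringNumber_mono (hR.union hUnion) hsub hr
    _ ≤ coveringNumber R r +
          ∑ γ ∈ (G.pathsFrom n i).erase γ₀, coveringNumber (G.pathMap γ '' L γ) r :=
        (coveringNumber_union_le hR hUnion hr).trans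
          (Nat.add_le_add_left (coveringNumber_biUnion_le himage hr) _)
    _ ≤ coveringNumber R r +
          ∑ γ ∈ (G.pathsFrom n i).erase γ₀, coveringNumber (L γ) (r / G.pathRatio γ) := by
        gcongr with γ
        exact (G.isSimilarity_pathMap γ).coveringNumber_image_le (hL γ) hr

-- Discarding a cylinder that lies well inside `U i` makes the renewal inequality of the boundary
-- layers strictly subcritical.
theorem isLittleO_coveringNumber_boundaryLayer (hSC : G.StronglyConnected) (hK : G.IsAttractor K)
    (hKC : G.IsInhomAttractor C KC) (hUo : ∀ i, IsOpen (U i))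
    (hUS : ∀ e, MapsTo (G.S e) (U (G.term e)) (U (G.init e))) (hUK : ∀ i, (U i ∩ K i).Nonempty)
    (hs : matrixSpectralRadius (G.Amatrix s) ≤ 1) (hC : ∀ i, IsNegligible s (C i)) (i : V) :
    (fun r ↦ (coveringNumber (boundaryLayer (KC i) (U i) (2 * r)) r : ℝ)) =o[𝓝[>] 0]
      fun r ↦ r ^ (-s) := by
  classical
  have hKCb : ∀ i, Bornology.IsBounded (KC i) := fun i ↦ (hKC.1 i).isBounded
  obtain ⟨q, hq0, hq1, hq⟩ := G.exists_r_le
  obtain ⟨h, hh, hAh⟩ := hSC.exists_pos_Amatrix_mulVec_le hs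
  choose n γ₀ hγ₀ δ hδ hdeep using fun i ↦ hK.exists_path_closedBall_subset (hUo i) (hUK i) hKCb
  choose R hR hKR using fun i ↦ hKC.exists_isNegligible hC (n i + 1) i
  refine isLittleO_of_renewal (P := fun i ↦ (G.pathsFrom (n i + 1) i).erase (γ₀ i))
    (τ := G.pathTerm) (ρ := G.pathRatio) (c := fun i r ↦ coveringNumber (R i) r)
    (N := fun i r ↦ coveringNumber (boundaryLayer (KC i) (U i) (2 * r)) r)
    hq0 hq1 (fun i γ hγ ↦ ⟨(G.isSimilarity_pathMap γ).pos, ?_⟩) hh (fun i ↦ ?_)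
    (fun i r ↦ Nat.cast_nonneg _) (fun i x hx ↦ ?_) (fun i ↦ (hR i).isLittleO) (fun i ↦ ?_) i
  · exact (pathRatio_le_pow hq (Finset.mem_of_mem_erase hγ)).trans
      (pow_le_of_le_one hq0.le hq1.le (Nat.succ_ne_zero _))
  · exact (Finset.sum_erase_lt_of_pos (hγ₀ i) (mul_pos (Real.rpow_pos_of_pos
      (G.isSimilarity_pathMap _).pos s) (hh _))).trans_le
        (sum_pathsFrom_pathRatio_rpow_mul_le hAh _ i)
  · refine ⟨coveringNumber (KC i) x, ?_⟩
    rintro _ ⟨r, hr, rfl⟩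
    exact Nat.cast_le.2 ((coveringNumber_mono (hKCb i) boundaryLayer_subset
      (hx.trans_le hr)).trans (coveringNumber_anti (hKCb i) hx hr))
  · filter_upwards [Ioo_mem_nhdsGT (half_pos (hδ i))] with r hr
    have hdeep' : ∀ y ∈ KC (G.pathTerm i (γ₀ i)), closedBall (G.pathMap (γ₀ i) y) (2 * r) ⊆ U i :=
      fun y hy ↦ (closedBall_subset_closedBall (by linarith [hr.2])).trans (hdeep i y hy)
    exact_mod_cast coveringNumber_boundaryLayer_le hUS hKCb (hR i).isBounded hr.1 (hKR i) hdeep'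

theorem isLittleO_sum_coveringNumber_sub_iUnion (hSC : G.StronglyConnected) (hK : G.IsAttractor K)
    (hKC : G.IsInhomAttractor C KC) (hUo : ∀ i, IsOpen (U i))
    (hUS : ∀ e, MapsTo (G.S e) (U (G.term e)) (U (G.init e)))
    (hUd : Pairwise fun i j ↦ Disjoint (U i) (U j)) (hUK : ∀ i, (U i ∩ K i).Nonempty)
    (hs : matrixSpectralRadius (G.Amatrix s) ≤ 1) (hC : ∀ i, IsNegligible s (C i)) :
    (fun r ↦ ∑ i, (coveringNumber (KC i) r : ℝ) - coveringNumber (⋃ i, KC i) r) =o[𝓝[>] 0]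
      fun r ↦ r ^ (-s) := by
  have hKCb : ∀ i, Bornology.IsBounded (KC i) := fun i ↦ (hKC.1 i).isBounded
  have hlayers := IsLittleO.fun_sum fun i (_ : i ∈ Finset.univ) ↦
    isLittleO_coveringNumber_boundaryLayer hSC hK hKC hUo hUS hUK hs hC i
  refine IsBigO.trans_isLittleO (.of_bound 1 ?_) hlayers
  filter_upwards [self_mem_nhdsWithin] with r hr
  have hle : (coveringNumber (⋃ i, KC i) r : ℝ) ≤ ∑ i, (coveringNumber (KC i) r : ℝ) :=
    mod_cast coveringNumber_iUnion_le hKCb hr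
  have hge : ∑ i, (coveringNumber (KC i) r : ℝ) ≤ coveringNumber (⋃ i, KC i) r +
      ∑ i, (coveringNumber (boundaryLayer (KC i) (U i) (2 * r)) r : ℝ) :=
    mod_cast sum_coveringNumber_le_add_boundaryLayer hKCb hUd hr
  rw [one_mul, Real.norm_of_nonneg (sub_nonneg.2 hle)]
  exact (sub_le_iff_le_add'.2 hge).trans (Real.le_norm_self _)

end Attractors

end MWGraph

theorem stmt13_general {d : ℕ} {V E : Type} [Fintype V] [Fintype E] [DecidableEq V]
    (G : MWGraph d V E) (hSC : G.StronglyConnected) {C K KC U : V → Set (Pt d)}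
    (hK : G.IsAttractor K) (hKC : G.IsInhomAttractor C KC) (hUo : ∀ i, IsOpen (U i))
    (hUS : ∀ e, MapsTo (G.S e) (U (G.term e)) (U (G.init e)))
    (hUd : Pairwise fun i j ↦ Disjoint (U i) (U j)) (hUK : ∀ i, (U i ∩ K i).Nonempty) {s : ℝ}
    (hs : matrixSpectralRadius (G.Amatrix s) ≤ 1)
    (hC : ∀ i, (fun r ↦ (coveringNumber (C i) r : ℝ)) =o[𝓝[>] 0] fun r ↦ r ^ (-s))
    {ι : Type*} {F : Filter ι} {t : ι → ℝ} (ht : Tendsto t F atTop) {l : V → ℝ}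
    (hl : ∀ i, Tendsto (fun n ↦ Real.exp (-s * t n) *
      (coveringNumber (KC i) (Real.exp (-(t n))) : ℝ)) F (𝓝 (l i))) :
    Tendsto (fun n ↦ Real.exp (-s * t n) * (coveringNumber (⋃ i, KC i) (Real.exp (-(t n))) : ℝ))
      F (𝓝 (∑ i, l i)) := by
  have hdiff := isLittleO_rpow_neg_iff_tendsto.1
    (MWGraph.isLittleO_sum_coveringNumber_sub_iUnion hSC hK hKC hUo hUS hUd hUK hs
      fun i ↦ ⟨hKC.isBounded_condensation i, hC i⟩)
  have hlim := (tendsto_finsetSum Finset.univ fun i _ ↦ hl i).sub (hdiff.comp ht)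
  rw [sub_zero] at hlim
  refine hlim.congr fun n ↦ ?_
  rw [Function.comp_apply, ← Finset.mul_sum, ← mul_sub, sub_sub_cancel]

theorem stmt13 {d : ℕ} {V E : Type} [Fintype V] [Fintype E] [DecidableEq V]
    (G : MWGraph d V E) (hSC : G.StronglyConnected)
    (C K KC U : V → Set (Pt d))
    (hC : G.IsCondensation C) (hK : G.IsAttractor K) (hKC : G.IsInhomAttractor C KC)
    (hU : G.IsOSCWith U) (hUK : ∀ i, (U i ∩ K i).Nonempty)
    (hCU : ∀ i, C i ⊆ closure (U i))
    (s0 : ℝ) (hs0 : IsS0 G s0)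
    (hint : ∀ i : V, ∫⁻ t in Set.Ioi (0 : ℝ),
      ENNReal.ofReal (Real.exp (-s0 * t) * (coveringNumber (C i) (Real.exp (-t)) : ℝ)) < ⊤)
    (hX : Pairwise fun i j : V => Disjoint (interior (G.X i)) (interior (G.X j)))
    (t : ℕ → ℝ) (htpos : ∀ n, 0 < t n) (htop : Tendsto t atTop atTop)
    (l : V → ℝ)
    (hl : ∀ i : V, Tendsto (fun n : ℕ => Real.exp (-s0 * t n) *
      (coveringNumber (KC i) (Real.exp (-(t n))) : ℝ)) atTop (𝓝 (l i))) :
    Tendsto (fun n : ℕ => Real.exp (-s0 * t n) *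
      (coveringNumber (⋃ i : V, KC i) (Real.exp (-(t n))) : ℝ)) atTop (𝓝 (∑ i : V, l i)) :=
  stmt13_general G hSC hK hKC hU.2.1 hU.mapsTo
    (fun i j hij ↦ (hX hij).mono (hU.subset_interior i) (hU.subset_interior j)) hUK hs0.2.le
    (fun i ↦ isLittleO_coveringNumber_of_lintegral_ne_top (hC i).1.isBounded (hint i).ne) htop hl
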